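/- Let p ≥ 6, u = 2^(1−p), and let o_x, o_y ∈ [1, 1/(8u) − 2]. Let x_h, x_l, y_h, y_l ∈ F_p satisfy |x_l| ≤ o_x·u·|x_h| and |y_l| ≤ o_y·u·|y_h|. Consider any execution of accurate double-word addition in faithful rounding, and assume additionally that the computed pair (t_h, t_l) satisfies |t_l| ≤ o_t·u·|t_h| for some o_t ∈ [1, 1/(8u) − 2]. Then the concluding Fast2Sum (normalization) step is valid: |z_h + z_l − (v_h + w)| ≤ u²·|v_h + w|. -/

import Mathlib

/-!
The last step is a Fast2Sum of `vh` and `w`.  Such a step is harmless as soon as `d2 = zh - vh` is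
computed without error: then `zl` is a faithful rounding of the rounding error `vh + w - zh`, and
two relative errors of at most `u` multiply to `u ^ 2`.  By `fast2sum_exact`, `d2` is exact whenever
`vh` is an integer multiple of some `2 ^ e` for which `w = M * 2 ^ e` with `|M| < 2 ^ p`; in
particular this holds when `|w| ≤ |vh|` (`grid_of_le`).

It remains to find such a grid.  Write `σ = |xh + yh|`.

* If `σ > min |xh| |yh|`, there is no severe cancellation: `|xh|, |yh| < 2σ`.  Bounding every
  rounding error by `1/32` and every overlap `o * u` by `1/8` gives `|w| ≤ |vh|`.
* If `σ ≤ min |xh| |yh|`, the sum `xh + yh` is exact (`sterbenz`), so `sl = 0` and `c = th`.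
  The same dichotomy is applied to `sh + th`.
  Without severe cancellation, again `|w| ≤ |vh|`.  With cancellation, `vh = sh + th` is exact,
  `vl = 0` and `w = tl`, and `vh` may be much smaller than `w`.  But `vh = xh + yh + th`, where each of
  the three terms dominates `tl` in absolute value and so lies on the grid of `tl`.
-/

/-- The radix-2, precision-`p` floating-point numbers with unlimited exponent range. -/
def Fp (p : ℕ) : Set ℝ := {x : ℝ | ∃ M e : ℤ, |M| ≤ 2 ^ p - 1 ∧ x = (M : ℝ) * (2 : ℝ) ^ e}

/-- Round toward `-∞`: the largest floating-point number `≤ x`. -/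
noncomputable def RD (p : ℕ) (x : ℝ) : ℝ := sSup {f : ℝ | f ∈ Fp p ∧ f ≤ x}

/-- Round toward `+∞`: the smallest floating-point number `≥ x`. -/
noncomputable def RU (p : ℕ) (x : ℝ) : ℝ := sInf {f : ℝ | f ∈ Fp p ∧ x ≤ f}

/-- `y` is a faithful rounding of `x`. -/
def Faithful (p : ℕ) (x y : ℝ) : Prop := y = RD p x ∨ y = RU p x

/-- All hypotheses of one execution of the accurate double-word addition algorithm
(`(s_h,s_l) = 2Sum(x_h,y_h)`, `(t_h,t_l) = 2Sum(x_l,y_l)`, `c = ∘(s_l+t_h)`,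
`(v_h,v_l) = Fast2Sum(s_h,c)`, `w = ∘(t_l+v_l)`, `(z_h,z_l) = Fast2Sum(v_h,w)`)
in faithful rounding, each rounding chosen independently. -/
def AccurateFaithful (p : ℕ) (xh xl yh yl sh a1 b1 da1 db1 sl th a2 b2 da2 db2 tl
    c vh d1 vl w zh d2 zl : ℝ) : Prop :=
  Faithful p (xh + yh) sh ∧ Faithful p (sh - yh) a1 ∧ Faithful p (sh - a1) b1 ∧
  Faithful p (xh - a1) da1 ∧ Faithful p (yh - b1) db1 ∧ Faithful p (da1 + db1) sl ∧
  Faithful p (xl + yl) th ∧ Faithful p (th - yl) a2 ∧ Faithful p (th - a2) b2 ∧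
  Faithful p (xl - a2) da2 ∧ Faithful p (yl - b2) db2 ∧ Faithful p (da2 + db2) tl ∧
  Faithful p (sl + th) c ∧
  Faithful p (sh + c) vh ∧ Faithful p (vh - sh) d1 ∧ Faithful p (c - d1) vl ∧
  Faithful p (tl + vl) w ∧
  Faithful p (vh + w) zh ∧ Faithful p (zh - vh) d2 ∧ Faithful p (w - d2) zl

/-! ### Floating-point numbers and their grids -/

theorem Fp_of_le {p : ℕ} (hp : 1 ≤ p) {N e : ℤ} (h : |N| ≤ 2 ^ p) :
    (N : ℝ) * (2 : ℝ) ^ e ∈ Fp p := by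
  rcases h.lt_or_eq with h | h
  · exact ⟨N, e, by omega, rfl⟩
  · -- `± 2 ^ p` has one digit too many, but it is `± 1` at a larger exponent.
    have h2 : (2 : ℤ) ^ 1 ≤ 2 ^ p := pow_le_pow_right₀ (by norm_num) hp
    rcases (abs_eq (by positivity)).mp h with h | h
    · refine ⟨1, e + p, by simp; linarith, ?_⟩
      rw [zpow_add₀ (by norm_num), zpow_natCast, h]; push_cast; ring
    · refine ⟨-1, e + p, by simp; linarith, ?_⟩
      rw [zpow_add₀ (by norm_num), zpow_natCast, h]; push_cast; ring

theorem Fp_neg {p : ℕ} {x : ℝ} (h : x ∈ Fp p) : -x ∈ Fp p := by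
  obtain ⟨M, e, hM, rfl⟩ := h
  exact ⟨-M, e, by rwa [abs_neg], by push_cast; ring⟩

theorem Fp_zero {p : ℕ} (hp : 1 ≤ p) : (0 : ℝ) ∈ Fp p := by
  have := Fp_of_le hp (N := 0) (e := 0) (by positivity)
  simpa using this

/-- The binade of a nonzero real, indexed by the exponent `k` of its unit in the last place. -/
theorem exists_binade (p : ℕ) {x : ℝ} (hx : x ≠ 0) :
    ∃ k : ℤ, (2 : ℝ) ^ p * 2 ^ k ≤ 2 * |x| ∧ |x| < 2 ^ p * 2 ^ k := by
  obtain ⟨E, h1, h2⟩ := exists_mem_Ico_zpow (abs_pos.mpr hx) (one_lt_two (α := ℝ))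
  refine ⟨E + 1 - p, ?_⟩
  have : (2 : ℝ) ^ p * 2 ^ (E + 1 - p) = 2 ^ (E + 1) := by
    rw [← zpow_natCast, ← zpow_add₀ (by norm_num)]; congr 1; ring
  rw [this]
  refine ⟨?_, h2⟩
  rw [zpow_add₀ (by norm_num), zpow_one]; linarith

/-- A float of at least a given binade is an integer multiple of the ulp of that binade. -/
theorem Fp_multiple {p : ℕ} {a : ℝ} (ha : a ∈ Fp p) {k : ℤ}
    (h : (2 : ℝ) ^ p * 2 ^ k ≤ 2 * |a|) : ∃ N : ℤ, a = N * 2 ^ k := by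
  obtain ⟨M, q, hM, rfl⟩ := ha
  rcases le_or_gt k q with hq | hq
  · obtain ⟨n, rfl⟩ := Int.le.dest hq
    refine ⟨M * 2 ^ n, ?_⟩
    rw [zpow_add₀ (by norm_num), zpow_natCast]; push_cast; ring
  · exfalso
    have hM' : |(M : ℝ)| ≤ 2 ^ p - 1 := by exact_mod_cast hM
    have h0 : (0 : ℝ) < 2 ^ q := by positivity
    have h1 : (2 : ℝ) * 2 ^ q ≤ 2 ^ k := by
      rw [← zpow_one_add₀ (by norm_num)]
      exact zpow_le_zpow_right₀ (by norm_num) (by omega)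
    rw [abs_mul, abs_of_pos h0] at h
    have h2 : (2 : ℝ) ^ p * (2 * 2 ^ q) ≤ 2 ^ p * 2 ^ k := by gcongr
    nlinarith

/-- A float `b` has a `p`-bit significand on some grid `2 ^ e` that contains, if `b ≠ 0`, every float
`a` with `|b| ≤ |a|`. -/
theorem common_grid {p : ℕ} {b : ℝ} (hb : b ∈ Fp p) :
    ∃ M e : ℤ, |M| ≤ 2 ^ p - 1 ∧ b = M * 2 ^ e ∧
      ∀ a ∈ Fp p, b ≠ 0 → |b| ≤ |a| → ∃ N : ℤ, a = N * 2 ^ e := by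
  rcases eq_or_ne b 0 with rfl | h0
  · have : (1 : ℤ) ≤ 2 ^ p := one_le_pow₀ (by norm_num)
    exact ⟨0, 0, by simpa using this, by simp, fun _ _ h => absurd rfl h⟩
  · obtain ⟨k, h1, h2⟩ := exists_binade p h0
    obtain ⟨M, hM⟩ := Fp_multiple hb h1
    refine ⟨M, k, ?_, hM, fun a ha _ hab => Fp_multiple ha (by linarith)⟩
    have hk : (0 : ℝ) < 2 ^ k := by positivity
    rw [hM, abs_mul, abs_of_pos hk] at h2
    have h3 : |(M : ℝ)| < 2 ^ p := lt_of_mul_lt_mul_right h2 hk.le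
    have : |M| < 2 ^ p := by exact_mod_cast h3
    omega

/-- Sterbenz' lemma: a sum that is no larger than either summand is exact. -/
theorem sterbenz {p : ℕ} {a b : ℝ} (ha : a ∈ Fp p) (hb : b ∈ Fp p)
    (h1 : |a + b| ≤ |a|) (h2 : |a + b| ≤ |b|) : a + b ∈ Fp p := by
  wlog hab : |b| ≤ |a| generalizing a b
  · rw [add_comm]
    rw [add_comm] at h1 h2
    exact this hb ha h2 h1 (le_of_not_ge hab)
  rcases eq_or_ne b 0 with rfl | h0
  · simpa using ha
  obtain ⟨M, e, hM, hbM, H⟩ := common_grid hb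
  obtain ⟨N, hN⟩ := H a ha h0 hab
  have he : (0 : ℝ) < 2 ^ e := by positivity
  have hs : a + b = ((N + M : ℤ) : ℝ) * 2 ^ e := by rw [hN, hbM]; push_cast; ring
  refine ⟨N + M, e, ?_, hs⟩
  rw [hs, hbM, abs_mul, abs_mul] at h2
  have h3 := le_of_mul_le_mul_right h2 (abs_pos.mpr he.ne')
  have : |N + M| ≤ |M| := by exact_mod_cast h3
  omega

/-! ### Faithful rounding -/

theorem RU_eq (p : ℕ) (x : ℝ) : RU p x = -RD p (-x) := by
  unfold RU RD
  rw [Real.sInf_def]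
  congr 2
  ext f
  simp only [Set.mem_neg, Set.mem_ofPred_eq]
  constructor
  · rintro ⟨h1, h2⟩
    exact ⟨by simpa using Fp_neg h1, by linarith⟩
  · rintro ⟨h1, h2⟩
    exact ⟨Fp_neg h1, by linarith⟩

theorem RD_self {p : ℕ} {x : ℝ} (hx : x ∈ Fp p) : RD p x = x :=
  IsGreatest.csSup_eq ⟨⟨hx, le_rfl⟩, fun _ hf => hf.2⟩

theorem Faithful.exact {p : ℕ} {x y : ℝ} (h : Faithful p x y) (hx : x ∈ Fp p) : y = x := by
  rcases h with h | h
  · rw [h, RD_self hx]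
  · rw [h, RU_eq, RD_self (Fp_neg hx), neg_neg]

theorem RD_eq_floor {p : ℕ} (hp : 1 ≤ p) {x : ℝ} {k : ℤ} (h1 : (2 : ℝ) ^ p * 2 ^ k ≤ 2 * |x|)
    (h2 : |x| < 2 ^ p * 2 ^ k) :
    RD p x = (⌊x / 2 ^ k⌋ : ℤ) * 2 ^ k ∧ |⌊x / 2 ^ k⌋| ≤ 2 ^ p := by
  have hk : (0 : ℝ) < 2 ^ k := by positivity
  have hN : |⌊x / 2 ^ k⌋| ≤ 2 ^ p := by
    obtain ⟨h3, h4⟩ := abs_lt.mp h2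
    rw [abs_le]
    constructor
    · rw [Int.le_floor, le_div_iff₀ hk]; push_cast; linarith
    · have : ⌊x / 2 ^ k⌋ < 2 ^ p := by
        rw [Int.floor_lt, div_lt_iff₀ hk]; push_cast; linarith
      exact this.le
  refine ⟨IsGreatest.csSup_eq ⟨⟨Fp_of_le hp hN, ?_⟩, ?_⟩, hN⟩
  · rw [← le_div_iff₀ hk]; exact Int.floor_le _
  · rintro f ⟨hf, hfx⟩
    by_cases hc : (2 : ℝ) ^ p * 2 ^ k ≤ 2 * |f|
    · obtain ⟨N, rfl⟩ := Fp_multiple hf hc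
      have : N ≤ ⌊x / 2 ^ k⌋ := by rw [Int.le_floor, le_div_iff₀ hk]; exact hfx
      have : (N : ℝ) ≤ (⌊x / 2 ^ k⌋ : ℤ) := by exact_mod_cast this
      gcongr
    · -- `f` lies in a lower binade than `x`, so `x > 0` and the bottom of its binade separates them.
      have hx : 0 < x := by
        by_contra hx
        rw [abs_of_nonpos (by linarith)] at h1 hc
        linarith
      rw [abs_of_pos hx] at h1
      obtain ⟨q, rfl⟩ := Nat.exists_eq_add_of_le' hp
      have h3 : ((2 ^ q : ℤ)) ≤ ⌊x / 2 ^ k⌋ := by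
        rw [Int.le_floor, le_div_iff₀ hk]; push_cast; rw [pow_succ] at h1; linarith
      have h4 : (2 : ℝ) ^ q ≤ (⌊x / 2 ^ k⌋ : ℤ) := by exact_mod_cast h3
      have h5 : (2 : ℝ) ^ q * 2 ^ k ≤ (⌊x / 2 ^ k⌋ : ℤ) * 2 ^ k := by gcongr
      rw [pow_succ] at hc
      have := le_abs_self f
      linarith

/-- A faithful rounding lies on the ulp grid of the binade of `x`, less than one ulp from `x`. -/
theorem Faithful.spec {p : ℕ} (hp : 1 ≤ p) {x y : ℝ} {k : ℤ} (h : Faithful p x y)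
    (h1 : (2 : ℝ) ^ p * 2 ^ k ≤ 2 * |x|) (h2 : |x| < 2 ^ p * 2 ^ k) :
    ∃ N : ℤ, |N| ≤ 2 ^ p ∧ y = N * 2 ^ k ∧ |y - x| < 2 ^ k := by
  have hk : (0 : ℝ) < 2 ^ k := by positivity
  have key : ∀ t : ℝ, |(⌊t / 2 ^ k⌋ : ℤ) * 2 ^ k - t| < (2 : ℝ) ^ k := by
    intro t
    have h3 := (le_div_iff₀ hk).mp (Int.floor_le (t / 2 ^ k))
    have h4 := (div_lt_iff₀ hk).mp (Int.lt_floor_add_one (t / 2 ^ k))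
    rw [abs_lt]; constructor <;> linarith
  rcases h with h | h
  · obtain ⟨h3, h4⟩ := RD_eq_floor hp h1 h2
    exact ⟨_, h4, h.trans h3, by rw [h, h3]; exact key x⟩
  · rw [← abs_neg] at h1 h2
    obtain ⟨h3, h4⟩ := RD_eq_floor hp h1 h2
    rw [RU_eq, h3] at h
    refine ⟨-⌊-x / 2 ^ k⌋, by rwa [abs_neg], by rw [h]; push_cast; ring, ?_⟩
    have := key (-x)
    rw [← abs_neg] at this
    rw [h]
    convert this using 2
    ring

theorem Faithful.mem {p : ℕ} (hp : 1 ≤ p) {x y : ℝ} (h : Faithful p x y) : y ∈ Fp p := by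
  rcases eq_or_ne x 0 with rfl | h0
  · rw [h.exact (Fp_zero hp)]; exact Fp_zero hp
  · obtain ⟨k, h1, h2⟩ := exists_binade p h0
    obtain ⟨N, hN, rfl, -⟩ := h.spec hp h1 h2
    exact Fp_of_le hp hN

theorem Faithful.error {p : ℕ} (hp : 1 ≤ p) {x y : ℝ} (h : Faithful p x y) :
    |y - x| ≤ (2 : ℝ) ^ (1 - (p : ℤ)) * |x| := by
  rcases eq_or_ne x 0 with rfl | h0
  · rw [h.exact (Fp_zero hp)]; simp
  · obtain ⟨k, h1, h2⟩ := exists_binade p h0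
    obtain ⟨N, -, -, h3⟩ := h.spec hp h1 h2
    have h4 : (2 : ℝ) ^ (1 - (p : ℤ)) * 2 ^ p = 2 := by
      rw [← zpow_natCast, ← zpow_add₀ (by norm_num)]; simp
    have h5 : (2 : ℝ) ^ (1 - (p : ℤ)) * (2 ^ p * 2 ^ k) ≤ 2 ^ (1 - (p : ℤ)) * (2 * |x|) := by
      gcongr
    rw [← mul_assoc, h4] at h5
    linarith

/-- Coarse relative error bound, all that is needed outside the last Fast2Sum. -/
theorem Faithful.coarse {p : ℕ} (hp : 6 ≤ p) {x y B : ℝ} (h : Faithful p x y) (hB : |x| ≤ B) :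
    x - B / 32 ≤ y ∧ y ≤ x + B / 32 := by
  have h1 := h.error (by omega)
  have h2 : (2 : ℝ) ^ (1 - (p : ℤ)) ≤ 2 ^ (-5 : ℤ) :=
    zpow_le_zpow_right₀ (by norm_num) (by omega)
  have h3 : (2 : ℝ) ^ (1 - (p : ℤ)) * |x| ≤ 2 ^ (-5 : ℤ) * B := by gcongr
  norm_num at h3
  obtain ⟨h4, h5⟩ := abs_le.mp h1
  constructor <;> linarith

/-! ### Fast2Sum -/

/-- If `a` is a multiple of a grid on which `b` has a `p`-bit significand, the subtraction
`s - a` in Fast2Sum is exact.  No ordering of `|a|` and `|b|` is required. -/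
theorem fast2sum_exact {p : ℕ} (hp : 2 ≤ p) {a s : ℝ} {M N e : ℤ} (hM : |M| ≤ 2 ^ p - 1)
    (haN : a = N * 2 ^ e) (ha : a ∈ Fp p) (hs : Faithful p (a + M * 2 ^ e) s) :
    s - a ∈ Fp p := by
  have hp1 : 1 ≤ p := by omega
  set b : ℝ := M * 2 ^ e with hb
  have hbF : b ∈ Fp p := ⟨M, e, hM, hb⟩
  have hsum : a + b = ((N + M : ℤ) : ℝ) * 2 ^ e := by rw [haN, hb]; push_cast; ring
  have he : (0 : ℝ) < 2 ^ e := by positivity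
  by_cases hle : |N + M| ≤ 2 ^ p
  · rw [hs.exact (by rw [hsum]; exact Fp_of_le hp1 hle)]
    simpa using hbF
  push Not at hle
  have hpp : (0 : ℝ) < 2 ^ p := by positivity
  have hle' : (2 : ℝ) ^ p < |((N + M : ℤ) : ℝ)| := by exact_mod_cast hle
  have habs : |a + b| = |((N + M : ℤ) : ℝ)| * 2 ^ e := by rw [hsum, abs_mul, abs_of_pos he]
  have hbig : (2 : ℝ) ^ p * 2 ^ e < |a + b| := by rw [habs]; gcongr
  have hbabs : |b| ≤ (2 ^ p - 1) * 2 ^ e := by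
    rw [hb, abs_mul, abs_of_pos he]
    have : |(M : ℝ)| ≤ 2 ^ p - 1 := by exact_mod_cast hM
    gcongr
  have hne : a + b ≠ 0 := by
    intro h; rw [h, abs_zero] at hbig
    have : 0 < (2 : ℝ) ^ p * 2 ^ e := by positivity
    linarith
  obtain ⟨k, h1, h2⟩ := exists_binade p hne
  obtain ⟨S, -, hS, herr⟩ := hs.spec hp1 h1 h2
  have hek : e < k := by
    have h3 : (2 : ℝ) ^ e < 2 ^ k := lt_of_mul_lt_mul_left (hbig.trans h2) hpp.le
    exact (zpow_lt_zpow_iff_right₀ (by norm_num)).mp h3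
  have hdiff : |s - a| < |b| + 2 ^ k := by
    have : s - a = (s - (a + b)) + b := by ring
    rw [this]
    linarith [abs_add_le (s - (a + b)) b]
  have hk1 : (2 : ℝ) ^ k = 2 * 2 ^ (k - 1) := by
    rw [← zpow_one_add₀ (by norm_num)]; congr 1; ring
  have hj : (0 : ℝ) < 2 ^ (k - 1) := by positivity
  have hp4 : (2 : ℝ) ^ 2 ≤ 2 ^ p := pow_le_pow_right₀ (by norm_num) hp
  -- In both cases `s` and `a` are multiples of `2 ^ (k - 1)` at distance `≤ 2 ^ p * 2 ^ (k - 1)`.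
  have finish : ∀ A : ℤ, a = A * 2 ^ (k - 1) → |b| ≤ (2 ^ p - 1) * 2 ^ (k - 1) →
      s - a ∈ Fp p := by
    intro A hA hbk
    have hsa : s - a = ((2 * S - A : ℤ) : ℝ) * 2 ^ (k - 1) := by
      rw [hS, hA, hk1]; push_cast; ring
    rw [hsa]
    apply Fp_of_le hp1
    rw [hsa, abs_mul, abs_of_pos hj] at hdiff
    have h3 : |((2 * S - A : ℤ) : ℝ)| * 2 ^ (k - 1) < (2 ^ p + 1) * 2 ^ (k - 1) := by linarith
    have h4 := lt_of_mul_lt_mul_right h3 hj.le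
    have h5 : |2 * S - A| < 2 ^ p + 1 := by exact_mod_cast h4
    omega
  rcases (show e = k - 1 ∨ e < k - 1 by omega) with h | h
  · subst h
    exact finish N haN hbabs
  · have h3 : (2 : ℝ) * 2 ^ e ≤ 2 ^ (k - 1) := by
      rw [← zpow_one_add₀ (by norm_num)]
      exact zpow_le_zpow_right₀ (by norm_num) (by omega)
    have h4 : (2 : ℝ) ^ p * (2 * 2 ^ e) ≤ 2 ^ p * 2 ^ (k - 1) := by gcongr
    have h6 : (4 : ℝ) * 2 ^ (k - 1) ≤ 2 ^ p * 2 ^ (k - 1) := by gcongr; linarith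
    -- `|b|` is at most half of the lower end of the binade of `a + b`, so `a` takes up the rest.
    have h5 : (2 : ℝ) ^ p * 2 ^ (k - 1) ≤ 2 * |a| := by
      rw [hk1] at h1
      linarith [abs_add_le a b]
    obtain ⟨A, hA⟩ := Fp_multiple ha h5
    exact finish A hA (by linarith)

/-- Under the grid condition `d = s - a` is exact, so `t` rounds the error of `s`, and the relative
error of Fast2Sum is at most `u ^ 2`. -/
theorem fast2sum_error {p : ℕ} (hp : 2 ≤ p) {a b s d t : ℝ} (ha : a ∈ Fp p)
    (hgrid : ∃ M N e : ℤ, |M| ≤ 2 ^ p - 1 ∧ b = M * 2 ^ e ∧ a = N * 2 ^ e)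
    (hs : Faithful p (a + b) s) (hd : Faithful p (s - a) d) (ht : Faithful p (b - d) t) :
    |s + t - (a + b)| ≤ ((2 : ℝ) ^ (1 - (p : ℤ))) ^ 2 * |a + b| := by
  obtain ⟨M, N, e, hM, rfl, hN⟩ := hgrid
  have hd' := hd.exact (fast2sum_exact hp hM hN ha hs)
  have h1 := hs.error (by omega)
  have h2 := ht.error (by omega)
  set b : ℝ := M * 2 ^ e
  have e1 : s + t - (a + b) = t - (b - d) := by rw [hd']; ring
  have e2 : |b - d| = |s - (a + b)| := by rw [hd', abs_sub_comm]; congr 1; ring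
  rw [e2] at h2
  rw [e1, pow_two, mul_assoc]
  exact h2.trans (by gcongr)

/-! ### The normalization step -/

/-- The grid hypothesis of `fast2sum_error` holds for ordered floats; unlike in `common_grid`,
`b = 0` is allowed, the grid then being that of `a`. -/
theorem grid_of_le {p : ℕ} {a b : ℝ} (ha : a ∈ Fp p) (hb : b ∈ Fp p)
    (h : |b| ≤ |a|) : ∃ M N e : ℤ, |M| ≤ 2 ^ p - 1 ∧ b = M * 2 ^ e ∧ a = N * 2 ^ e := by
  rcases eq_or_ne b 0 with rfl | h0
  · obtain ⟨N, e, hN, rfl⟩ := ha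
    exact ⟨0, N, e, by simpa using (abs_nonneg N).trans hN, by simp, rfl⟩
  · obtain ⟨M, e, hM, hbM, H⟩ := common_grid hb
    obtain ⟨N, hN⟩ := H a ha h0 h
    exact ⟨M, N, e, hM, hbM, hN⟩

/-- Without severe cancellation in `xh + yh`, the correction `w` is dominated by `vh`. -/
theorem w_le_of_no_cancel {p : ℕ} (hp : 6 ≤ p)
    {xh xl yh yl sh a1 b1 da1 db1 sl th tl c vh d1 vl w : ℝ}
    (hx : |xl| ≤ |xh| / 8) (hy : |yl| ≤ |yh| / 8) (ht : |tl| ≤ |th| / 8)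
    (hc : |xh| < |xh + yh| ∨ |yh| < |xh + yh|)
    (h1 : Faithful p (xh + yh) sh) (h2 : Faithful p (sh - yh) a1) (h3 : Faithful p (sh - a1) b1)
    (h4 : Faithful p (xh - a1) da1) (h5 : Faithful p (yh - b1) db1) (h6 : Faithful p (da1 + db1) sl)
    (h7 : Faithful p (xl + yl) th) (h13 : Faithful p (sl + th) c)
    (h14 : Faithful p (sh + c) vh) (h15 : Faithful p (vh - sh) d1) (h16 : Faithful p (c - d1) vl)
    (h17 : Faithful p (tl + vl) w) : |w| ≤ |vh| := by
  obtain ⟨σ, hσ⟩ : ∃ σ, σ = |xh + yh| := ⟨_, rfl⟩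
  have hσ0 : 0 ≤ σ := hσ ▸ abs_nonneg _
  rw [← hσ] at hc
  have tx : |xh| ≤ σ + |yh| := by
    have := abs_sub (xh + yh) yh
    rw [add_sub_cancel_right] at this; rwa [hσ]
  have ty : |yh| ≤ σ + |xh| := by
    have := abs_sub (xh + yh) xh
    rw [add_sub_cancel_left] at this; rwa [hσ]
  have hxy : |xh| + |yh| ≤ 3 * σ := by rcases hc with hc | hc <;> linarith
  have hxB : |xh| ≤ 2 * σ := by rcases hc with hc | hc <;> linarith
  have hyB : |yh| ≤ 2 * σ := by rcases hc with hc | hc <;> linarith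
  obtain ⟨x1, x2⟩ := abs_le.mp hxB
  obtain ⟨y1, y2⟩ := abs_le.mp hyB
  -- The numerical constants below are upper bounds on the successive quantities in units of `σ`.
  obtain ⟨r1, r1'⟩ := h1.coarse hp hσ.ge
  obtain ⟨r2, r2'⟩ := h2.coarse hp (B := 2.0313 * σ)
    (abs_le.mpr ⟨by linarith, by linarith⟩)
  obtain ⟨r3, r3'⟩ := h3.coarse hp (B := 2.0635 * σ)
    (abs_le.mpr ⟨by linarith, by linarith⟩)
  obtain ⟨r4, r4'⟩ := h4.coarse hp (B := 0.095 * σ)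
    (abs_le.mpr ⟨by linarith, by linarith⟩)
  obtain ⟨r5, r5'⟩ := h5.coarse hp (B := 0.1285 * σ)
    (abs_le.mpr ⟨by linarith, by linarith⟩)
  obtain ⟨r6, r6'⟩ := h6.coarse hp (B := 0.2306 * σ)
    (abs_le.mpr ⟨by linarith, by linarith⟩)
  have hT0 : |xl + yl| ≤ 0.375 * σ := by linarith [abs_add_le xl yl]
  obtain ⟨r7, r7'⟩ := h7.coarse hp hT0
  obtain ⟨q1, q2⟩ := abs_le.mp hT0
  have hT : |th| ≤ 0.3868 * σ := abs_le.mpr ⟨by linarith, by linarith⟩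
  obtain ⟨q3, q4⟩ := abs_le.mp hT
  obtain ⟨q5, q6⟩ := abs_le.mp (ht.trans (by linarith : |th| / 8 ≤ 0.0484 * σ))
  obtain ⟨r8, r8'⟩ := h13.coarse hp (B := 0.625 * σ)
    (abs_le.mpr ⟨by linarith, by linarith⟩)
  obtain ⟨s1, s2⟩ := abs_le.mp hσ.ge
  obtain ⟨r9, r9'⟩ := h14.coarse hp (B := 1.677 * σ)
    (abs_le.mpr ⟨by linarith, by linarith⟩)
  obtain ⟨r10, r10'⟩ := h15.coarse hp (B := 0.698 * σ)
    (abs_le.mpr ⟨by linarith, by linarith⟩)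
  obtain ⟨r11, r11'⟩ := h16.coarse hp (B := 0.075 * σ)
    (abs_le.mpr ⟨by linarith, by linarith⟩)
  obtain ⟨r12, r12'⟩ := h17.coarse hp (B := 0.126 * σ)
    (abs_le.mpr ⟨by linarith, by linarith⟩)
  have hw : |w| ≤ 0.13 * σ := abs_le.mpr ⟨by linarith, by linarith⟩
  refine hw.trans ?_
  rcases (abs_eq hσ0).mp hσ.symm with h | h
  · exact le_trans (by linarith) (le_abs_self vh)
  · exact le_trans (by linarith) (neg_le_abs vh)

/-- Without severe cancellation in `sh + th`, the correction `w` is dominated by `vh`, even if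
`|sh| < |th|` and the Fast2Sum of `sh` and `th` is inexact. -/
theorem w_le_of_no_cancel' {p : ℕ} (hp : 6 ≤ p) {sh th tl vh d1 vl w : ℝ}
    (ht : |tl| ≤ |th| / 8) (hc : |sh| < |sh + th| ∨ |th| < |sh + th|)
    (h14 : Faithful p (sh + th) vh) (h15 : Faithful p (vh - sh) d1)
    (h16 : Faithful p (th - d1) vl) (h17 : Faithful p (tl + vl) w) : |w| ≤ |vh| := by
  obtain ⟨σ, hσ⟩ : ∃ σ, σ = |sh + th| := ⟨_, rfl⟩
  have hσ0 : 0 ≤ σ := hσ ▸ abs_nonneg _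
  rw [← hσ] at hc
  have ty : |th| ≤ σ + |sh| := by
    have := abs_sub (sh + th) sh
    rw [add_sub_cancel_left] at this; rwa [hσ]
  have hT : |th| ≤ 2 * σ := by rcases hc with hc | hc <;> linarith
  obtain ⟨y1, y2⟩ := abs_le.mp hT
  obtain ⟨q5, q6⟩ := abs_le.mp (ht.trans (by linarith : |th| / 8 ≤ 0.25 * σ))
  obtain ⟨s1, s2⟩ := abs_le.mp hσ.ge
  obtain ⟨r9, r9'⟩ := h14.coarse hp hσ.ge
  obtain ⟨r10, r10'⟩ := h15.coarse hp (B := 2.04 * σ)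
    (abs_le.mpr ⟨by linarith, by linarith⟩)
  obtain ⟨r11, r11'⟩ := h16.coarse hp (B := 0.1 * σ)
    (abs_le.mpr ⟨by linarith, by linarith⟩)
  obtain ⟨r12, r12'⟩ := h17.coarse hp (B := 0.36 * σ)
    (abs_le.mpr ⟨by linarith, by linarith⟩)
  have hw : |w| ≤ 0.4 * σ := abs_le.mpr ⟨by linarith, by linarith⟩
  refine hw.trans ?_
  rcases (abs_eq hσ0).mp hσ.symm with h | h
  · exact le_trans (by linarith) (le_abs_self vh)
  · exact le_trans (by linarith) (neg_le_abs vh)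

/-- The admissible overlaps `o` satisfy `o * u ≤ 1/8`. -/
theorem overlap_le {u o a b : ℝ} (hu : 0 < u) (ho : o ≤ 1 / (8 * u) - 2)
    (h : |a| ≤ o * u * |b|) : |a| ≤ |b| / 8 := by
  have h1 : o * u ≤ (1 / (8 * u) - 2) * u := by gcongr
  have h2 : (1 / (8 * u) - 2) * u = 1 / 8 - 2 * u := by field_simp
  have h3 : o * u * |b| ≤ 1 / 8 * |b| := by gcongr; linarith
  linarith

theorem accurate_normalization_valid
    (p : ℕ) (hp : 6 ≤ p) (u : ℝ) (hu : u = (2 : ℝ) ^ (1 - (p : ℤ)))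
    (ox oy ot : ℝ) (hox1 : 1 ≤ ox) (hox2 : ox ≤ 1 / (8 * u) - 2)
    (hoy1 : 1 ≤ oy) (hoy2 : oy ≤ 1 / (8 * u) - 2)
    (hot1 : 1 ≤ ot) (hot2 : ot ≤ 1 / (8 * u) - 2)
    (xh xl yh yl : ℝ)
    (hxh : xh ∈ Fp p) (hxl : xl ∈ Fp p) (hyh : yh ∈ Fp p) (hyl : yl ∈ Fp p)
    (hovx : |xl| ≤ ox * u * |xh|) (hovy : |yl| ≤ oy * u * |yh|)
    (sh a1 b1 da1 db1 sl th a2 b2 da2 db2 tl c vh d1 vl w zh d2 zl : ℝ)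
    (hrun : AccurateFaithful p xh xl yh yl sh a1 b1 da1 db1 sl th a2 b2 da2 db2 tl
      c vh d1 vl w zh d2 zl)
    (hovt : |tl| ≤ ot * u * |th|) :
    |zh + zl - (vh + w)| ≤ u ^ 2 * |vh + w| := by
  obtain ⟨h1, h2, h3, h4, h5, h6, h7, -, -, -, -, h12, h13, h14, h15, h16, h17, h18, h19, h20⟩ := hrun
  have hp1 : 1 ≤ p := by omega
  have hu0 : 0 < u := by rw [hu]; positivity
  have hx := overlap_le hu0 hox2 hovx
  have hy := overlap_le hu0 hoy2 hovy
  have ht := overlap_le hu0 hot2 hovt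
  rw [hu]
  refine fast2sum_error (by omega) (h14.mem hp1) ?_ h18 h19 h20
  by_cases hc : |xh| < |xh + yh| ∨ |yh| < |xh + yh|
  · exact grid_of_le (h14.mem hp1) (h17.mem hp1)
      (w_le_of_no_cancel hp hx hy ht hc h1 h2 h3 h4 h5 h6 h7 h13 h14 h15 h16 h17)
  push Not at hc
  have hF0 : (0 : ℝ) ∈ Fp p := Fp_zero hp1
  -- The first 2Sum is exact with zero error term, so `c = th`.
  obtain rfl := h1.exact (sterbenz hxh hyh hc.1 hc.2)
  rw [add_sub_cancel_right] at h2
  obtain rfl := h2.exact hxh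
  rw [add_sub_cancel_left] at h3
  obtain rfl := h3.exact hyh
  rw [sub_self] at h4 h5
  obtain rfl := h4.exact hF0
  obtain rfl := h5.exact hF0
  rw [add_zero] at h6
  obtain rfl := h6.exact hF0
  rw [zero_add] at h13
  have hth := h7.mem hp1
  obtain rfl := h13.exact hth
  by_cases hc2 : |a1 + b1| < |a1 + b1 + c| ∨ |c| < |a1 + b1 + c|
  · exact grid_of_le (h14.mem hp1) (h17.mem hp1) (w_le_of_no_cancel' hp ht hc2 h14 h15 h16 h17)
  push Not at hc2
  -- The second cancellation makes `vh` exact, so `vl = 0` and `w = tl`.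
  obtain rfl := h14.exact (sterbenz (h1.mem hp1) hth hc2.1 hc2.2)
  rw [add_sub_cancel_left] at h15
  obtain rfl := h15.exact hth
  rw [sub_self] at h16
  obtain rfl := h16.exact hF0
  rw [add_zero] at h17
  have htl := h12.mem hp1
  obtain rfl := h17.exact htl
  rcases eq_or_ne w 0 with rfl | h0
  · exact grid_of_le (h14.mem hp1) hF0 (by simp)
  obtain ⟨M, e, hM, hwM, H⟩ := common_grid htl
  have hT0 := abs_add_le xl yl
  obtain ⟨r1, r2⟩ := h7.coarse hp le_rfl
  obtain ⟨r3, r4⟩ := abs_le.mp (le_refl |xl + yl|)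
  have hT : |d1| ≤ 33 / 32 * |xl + yl| := abs_le.mpr ⟨by linarith, by linarith⟩
  have tx : |a1| ≤ |a1 + b1| + |b1| := by
    have := abs_sub (a1 + b1) b1
    rwa [add_sub_cancel_right] at this
  have ty : |b1| ≤ |a1 + b1| + |a1| := by
    have := abs_sub (a1 + b1) a1
    rwa [add_sub_cancel_left] at this
  obtain ⟨X, hX⟩ := H a1 hxh h0 (by linarith [hc.1, hc.2, abs_nonneg a1])
  obtain ⟨Y, hY⟩ := H b1 hyh h0 (by linarith [hc.1, hc.2, abs_nonneg b1])
  obtain ⟨T, hT'⟩ := H d1 hth h0 (by linarith [abs_nonneg d1])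
  refine ⟨M, X + Y + T, e, hM, hwM, ?_⟩
  push_cast
  rw [add_mul, add_mul, ← hX, ← hY, ← hT']
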